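/- Let 0 ≤ r1, r2 ≤ n and let s, s' be distinct integers with 0 ≤ s, s' ≤ min(r1, n − r1, r2, n − r2). Then Σ_{x1 ∈ X_{r1}} Σ_{x2 ∈ X_{r2}} λ_s^{r1,r2}(|x2 \ x1|; n) · λ_{s'}^{r1,r2}(|x2 \ x1|; n) = 0; that is, the operators Λ_s^{r1,r2} and Λ_{s'}^{r1,r2} are orthogonal with respect to the Hilbert–Schmidt inner product. -/

import Mathlib

/-- Falling factorial `z(z-1)⋯(z-k+1)` for complex `z`. -/
noncomputable def cfall (z : ℂ) (k : ℕ) : ℂ := ∏ i ∈ Finset.range k, (z - i)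

/-- Generalized binomial coefficient `binom(t, j)` for complex `t`. -/
noncomputable def cbinom (t : ℂ) (j : ℕ) : ℂ := cfall t j / (Nat.factorial j)

/-- The Hahn kernel `λ_s^{r1,r2}(t; n)`. -/
noncomputable def hahn (n r1 r2 s : ℕ) (t : ℂ) : ℂ :=
  ∑ j ∈ Finset.range (s + 1),
    (-1 : ℂ) ^ j * cbinom t j * cfall (s : ℂ) j * cfall ((n : ℂ) - s + 1) j /
      (cfall ((n : ℂ) - r1) j * cfall (r2 : ℂ) j)

/-- The operator `Λ_s^{r1,r2} : (X_{r1} → ℂ) → (X_{r2} → ℂ)` with kernel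
`λ_s^{r1,r2}(|x2 \ x1|; n)`. -/
noncomputable def Lam (Ω : Type*) [Fintype Ω] [DecidableEq Ω] (n r1 r2 s : ℕ)
    (ψ : {x : Finset Ω // x.card = r1} → ℂ) : {x : Finset Ω // x.card = r2} → ℂ :=
  fun x2 => ∑ x1 : {x : Finset Ω // x.card = r1},
    hahn n r1 r2 s ((((x2 : Finset Ω) \ (x1 : Finset Ω)).card : ℕ) : ℂ) * ψ x1

/-!
Fix `x₁` and put `t = |y \ x₁|`, so that `|y ∩ x₁| = r2 - t`. Counting triples `A ⊆ y \ x₁`,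
`B ⊆ y ∩ x₁`, `y ⊇ A ∪ B` in two ways evaluates the sums over `y` of
`binom(|y \ x₁|, j) * binom(|y ∩ x₁|, m)`. For `m < s` the sum over `y` of
`λ_s(t) * binom(|y ∩ x₁|, m)` thereby becomes a multiple of the `s`-th finite difference of a
polynomial in `j` of degree `s - 1`, hence vanishes. By Newton's forward difference formula every
polynomial in `t` of degree less than `s` is a combination of the `binom(r2 - t, m)` with `m < s`,
so `λ_s` is orthogonal to `λ_{s'}` for `s' < s`, already for each fixed `x₁`.
-/

open Finset Polynomial
open scoped Nat

section FiniteDifferences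

variable {R : Type*} [CommRing R] {P : R[X]} {s : ℕ}

theorem sum_neg_one_pow_mul_choose_mul_eval_eq_zero (hP : P.natDegree < s) :
    ∑ j ∈ range (s + 1), (-1 : R) ^ j * s.choose j * P.eval (j : R) = 0 := by
  have hdiff : (fwdDiff 1)^[s] P.eval 0 = 0 := congrFun (fwdDiff_iter_eq_zero_of_degree_lt hP) 0
  rw [fwdDiff_iter_eq_sum_shift] at hdiff
  calc ∑ j ∈ range (s + 1), (-1 : R) ^ j * s.choose j * P.eval (j : R)
      = (-1) ^ s * ∑ j ∈ range (s + 1),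
          ((-1 : ℤ) ^ (s - j) * s.choose j) • P.eval (0 + j • (1 : R)) := by
        rw [mul_sum]
        refine sum_congr rfl fun j hj ↦ ?_
        have hsign : (-1 : R) ^ s * (-1) ^ (s - j) = (-1) ^ j := by
          obtain ⟨k, rfl⟩ := Nat.exists_eq_add_of_le (mem_range_succ_iff.mp hj)
          rw [Nat.add_sub_cancel_left, pow_add, mul_assoc, ← mul_pow, neg_one_mul, neg_neg,
            one_pow, mul_one]
        simp only [zsmul_eq_mul, nsmul_eq_mul, zero_add, mul_one]
        push_cast
        rw [← hsign]
        ring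
    _ = 0 := by rw [hdiff, mul_zero]

theorem eval_natCast_eq_sum_choose_mul_fwdDiff (hP : P.natDegree < s) (b : ℕ) :
    P.eval (b : R) = ∑ k ∈ range s, b.choose k * (fwdDiff 1)^[k] P.eval 0 := by
  have hnewton := shift_eq_sum_fwdDiff_iter (1 : R) P.eval b 0
  simp only [zero_add, nsmul_eq_mul, mul_one] at hnewton
  rw [hnewton]
  trans ∑ k ∈ range (b + 1 + s), b.choose k * (fwdDiff 1)^[k] P.eval 0
  · refine sum_subset (range_mono (by omega)) fun k _ hk ↦ ?_
    rw [Nat.choose_eq_zero_of_lt (by simpa using hk), Nat.cast_zero, zero_mul]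
  · refine (sum_subset (range_mono (by omega)) fun k _ hk ↦ ?_).symm
    rw [fwdDiff_iter_eq_zero_of_degree_lt (hP.trans_le (by simpa using hk)), Pi.zero_apply,
      mul_zero]

end FiniteDifferences

theorem exists_natDegree_le_eval_eq_descFactorial_sub (R : Type*) [CommRing R] [IsDomain R]
    (a k : ℕ) :
    ∃ P : R[X], P.natDegree ≤ k ∧ ∀ j ≤ a, P.eval (j : R) = (a - j).descFactorial k := by
  refine ⟨(descPochhammer R k).comp (C (a : R) - X), ?_, fun j hj ↦ ?_⟩
  · calc _ ≤ (descPochhammer R k).natDegree * (C (a : R) - X).natDegree := natDegree_comp_le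
      _ ≤ k * 1 := by
        rw [descPochhammer_natDegree]
        gcongr
        compute_degree
      _ = k := mul_one k
  · rw [eval_comp, eval_sub, eval_C, eval_X, ← Nat.cast_sub hj,
      descPochhammer_eval_eq_descFactorial]

section Counting

variable {Ω : Type*} [Fintype Ω] [DecidableEq Ω]

theorem card_filter_subset_powersetCard_univ {r : ℕ} (hr : r ≤ Fintype.card Ω) (A : Finset Ω) :
    #{y ∈ powersetCard r univ | A ⊆ y} = (Fintype.card Ω - #A).choose (Fintype.card Ω - r) := by
  rw [← card_compl, ← card_powersetCard]
  refine card_nbij' compl compl ?_ ?_ (fun y _ ↦ compl_compl y) fun y _ ↦ compl_compl y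
  · intro y hy
    simp_all [card_compl]
  · intro y hy
    simp_all [card_compl, subset_compl_comm, Nat.sub_sub_self hr]

theorem sum_choose_card_inter_mul_choose_card_inter {r : ℕ} (hr : r ≤ Fintype.card Ω)
    {u v : Finset Ω} (huv : Disjoint u v) (j m : ℕ) :
    ∑ y ∈ powersetCard r univ, (#(y ∩ u)).choose j * (#(y ∩ v)).choose m =
      (#u).choose j * (#v).choose m *
        (Fintype.card Ω - (j + m)).choose (Fintype.card Ω - r) := by
  let pairs := powersetCard j u ×ˢ powersetCard m v
  let contained (p : Finset Ω × Finset Ω) (y : Finset Ω) : Prop := p.1 ∪ p.2 ⊆ y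
  have hbelow (y : Finset Ω) :
      pairs.bipartiteBelow contained y = powersetCard j (y ∩ u) ×ˢ powersetCard m (y ∩ v) := by
    ext ⟨A, B⟩
    simp only [bipartiteBelow, pairs, contained, mem_filter, mem_product, mem_powersetCard,
      union_subset_iff, subset_inter_iff]
    tauto
  have habove : ∀ p ∈ pairs, #((powersetCard r univ).bipartiteAbove contained p) =
      (Fintype.card Ω - (j + m)).choose (Fintype.card Ω - r) := by
    rintro ⟨A, B⟩ hp
    simp only [pairs, mem_product, mem_powersetCard] at hp
    obtain ⟨⟨hAu, rfl⟩, hBv, rfl⟩ := hp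
    rw [← card_union_of_disjoint (huv.mono hAu hBv)]
    exact card_filter_subset_powersetCard_univ hr (A ∪ B)
  calc ∑ y ∈ powersetCard r univ, (#(y ∩ u)).choose j * (#(y ∩ v)).choose m
      = ∑ y ∈ powersetCard r univ, #(pairs.bipartiteBelow contained y) := by
        simp only [hbelow, card_product, card_powersetCard]
    _ = ∑ p ∈ pairs, #((powersetCard r univ).bipartiteAbove contained p) :=
        (sum_card_bipartiteAbove_eq_sum_card_bipartiteBelow contained).symm
    _ = _ := by
        rw [sum_const_nat habove, card_product, card_powersetCard, card_powersetCard]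

end Counting

theorem descFactorial_mul_choose_mul_factorial {n r s j m : ℕ} (hr : r ≤ n) (hs : s ≤ n)
    (hm : m < s) (hj : j ≤ r) (hjm : j + m ≤ n) :
    (n - s + 1).descFactorial j * (n - (j + m)).choose (n - r) * ((n - r)! * r !) =
      (n - s + 1)! * r.descFactorial j *
        ((n - m - j).descFactorial (s - 1 - m) * (r - j).descFactorial m) := by
  rw [show n - m - j = n - (j + m) by omega]
  rcases lt_or_ge r (j + m) with hlt | hle
  · rw [Nat.choose_eq_zero_of_lt (by omega), Nat.descFactorial_of_lt (n := r - j) (by omega)]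
    simp only [mul_zero, zero_mul]
  rcases lt_or_ge (n - s + 1) j with hlt' | hle'
  · rw [Nat.descFactorial_of_lt hlt', Nat.descFactorial_of_lt (n := n - (j + m)) (by omega)]
    simp only [mul_zero, zero_mul]
  have hr_fact : r ! = (r - j - m)! * (r - j).descFactorial m * r.descFactorial j := by
    rw [Nat.factorial_mul_descFactorial (by omega), Nat.factorial_mul_descFactorial hj]
  have hns_fact : (n - s + 1)! = (n - s + 1 - j)! * (n - s + 1).descFactorial j :=
    (Nat.factorial_mul_descFactorial hle').symm
  have hcancel : (n - (j + m)).choose (n - r) * (n - r)! * (r - j - m)! =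
      (n - s + 1 - j)! * (n - (j + m)).descFactorial (s - 1 - m) := by
    rw [show r - j - m = n - (j + m) - (n - r) by omega,
      Nat.choose_mul_factorial_mul_factorial (by omega),
      show n - s + 1 - j = n - (j + m) - (s - 1 - m) by omega,
      Nat.factorial_mul_descFactorial (by omega)]
  rw [hr_fact, hns_fact]
  linear_combination
    (n - s + 1).descFactorial j * ((r - j).descFactorial m * r.descFactorial j) * hcancel

theorem sum_neg_one_pow_mul_choose_mul_descFactorial_div_mul_choose_eq_zero
    {K : Type*} [Field K] [CharZero K] {n r s m : ℕ} (hr : r ≤ n) (hs : s ≤ r) (hm : m < s)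
    (hsm : s + m ≤ n) :
    ∑ j ∈ range (s + 1), (-1 : K) ^ j * s.choose j *
      ((n - s + 1).descFactorial j / r.descFactorial j * (n - (j + m)).choose (n - r)) = 0 := by
  obtain ⟨P, hP, hP_eval⟩ := exists_natDegree_le_eval_eq_descFactorial_sub K (n - m) (s - 1 - m)
  obtain ⟨Q, hQ, hQ_eval⟩ := exists_natDegree_le_eval_eq_descFactorial_sub K r m
  have hPQ : (P * Q).natDegree < s := natDegree_mul_le.trans_lt (by omega)
  have hcoeff : ∀ j ≤ s,
      ((n - s + 1).descFactorial j / r.descFactorial j * (n - (j + m)).choose (n - r) : K) =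
        (n - s + 1)! / ((n - r)! * r !) * (P * Q).eval (j : K) := by
    intro j hj
    have hdesc : (r.descFactorial j : K) ≠ 0 :=
      Nat.cast_ne_zero.mpr (Nat.descFactorial_pos.mpr (by omega)).ne'
    have hr_fact : (r ! : K) ≠ 0 := Nat.cast_ne_zero.mpr r.factorial_ne_zero
    have hnr_fact : ((n - r)! : K) ≠ 0 := Nat.cast_ne_zero.mpr (n - r).factorial_ne_zero
    rw [eval_mul, hP_eval j (by omega), hQ_eval j (by omega)]
    field_simp
    norm_cast
    linear_combination
      descFactorial_mul_choose_mul_factorial hr (hs.trans hr) hm (hj.trans hs) (by omega)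
  calc _ = (n - s + 1)! / ((n - r)! * r !) *
        ∑ j ∈ range (s + 1), (-1 : K) ^ j * s.choose j * (P * Q).eval (j : K) := by
        rw [mul_sum]
        exact sum_congr rfl fun j hj ↦ by rw [hcoeff j (mem_range_succ_iff.mp hj)]; ring
    _ = 0 := by rw [sum_neg_one_pow_mul_choose_mul_eval_eq_zero hPQ, mul_zero]

section Hahn

theorem cfall_eq_eval_descPochhammer (z : ℂ) (k : ℕ) : cfall z k = (descPochhammer ℂ k).eval z :=
  (descPochhammer_eval_eq_prod_range k z).symm

theorem cfall_natCast (a k : ℕ) : cfall (a : ℂ) k = a.descFactorial k := by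
  rw [cfall_eq_eval_descPochhammer, descPochhammer_eval_eq_descFactorial]

theorem cbinom_natCast (a j : ℕ) : cbinom (a : ℂ) j = a.choose j := by
  rw [cbinom, cfall_natCast, Nat.descFactorial_eq_factorial_mul_choose, Nat.cast_mul,
    mul_div_cancel_left₀ _ (Nat.cast_ne_zero.mpr j.factorial_ne_zero)]

theorem exists_natDegree_le_eval_eq_hahn (n r1 r2 s : ℕ) :
    ∃ P : ℂ[X], P.natDegree ≤ s ∧ ∀ t, P.eval t = hahn n r1 r2 s t := by
  refine ⟨∑ j ∈ range (s + 1), C ((-1) ^ j / j ! * cfall s j * cfall (n - s + 1) j /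
    (cfall (n - r1) j * cfall r2 j)) * descPochhammer ℂ j, ?_, fun t ↦ ?_⟩
  · refine natDegree_sum_le_of_forall_le _ _ fun j hj ↦ (natDegree_C_mul_le _ _).trans ?_
    rw [descPochhammer_natDegree]
    exact mem_range_succ_iff.mp hj
  · simp only [hahn, cbinom, eval_finsetSum, eval_mul, eval_C, cfall_eq_eval_descPochhammer]
    exact sum_congr rfl fun j _ ↦ by ring

theorem hahn_natCast {n r1 r2 s : ℕ} (hr1 : r1 ≤ n) (hs : s ≤ n) (t : ℕ) :
    hahn n r1 r2 s t = ∑ j ∈ range (s + 1), (-1 : ℂ) ^ j * s.choose j *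
      ((n - s + 1).descFactorial j / ((n - r1).choose j * r2.descFactorial j)) * t.choose j := by
  refine sum_congr rfl fun j _ ↦ ?_
  have hfact : (j ! : ℂ) ≠ 0 := Nat.cast_ne_zero.mpr j.factorial_ne_zero
  rw [← Nat.cast_sub hr1, ← Nat.cast_sub hs, ← Nat.cast_succ]
  simp only [cbinom_natCast, cfall_natCast]
  rw [Nat.descFactorial_eq_factorial_mul_choose s,
    Nat.descFactorial_eq_factorial_mul_choose (n - r1)]
  push_cast
  field_simp

variable {Ω : Type*} [Fintype Ω] [DecidableEq Ω] {x : Finset Ω} {r s : ℕ}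

theorem sum_hahn_mul_choose_card_inter (hr : r ≤ Fintype.card Ω)
    (hs : s ≤ min (Fintype.card Ω - #x) r) (m : ℕ) :
    ∑ y ∈ powersetCard r univ,
      hahn (Fintype.card Ω) #x r s #(y \ x) * (#(y ∩ x)).choose m =
    (#x).choose m * ∑ j ∈ range (s + 1), (-1 : ℂ) ^ j * s.choose j *
      ((Fintype.card Ω - s + 1).descFactorial j / r.descFactorial j *
        (Fintype.card Ω - (j + m)).choose (Fintype.card Ω - r)) := by
  have hx : #x ≤ Fintype.card Ω := card_le_univ x
  set n := Fintype.card Ω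
  have hmoment (j : ℕ) : ∑ y ∈ powersetCard r univ,
      ((#(y \ x)).choose j * (#(y ∩ x)).choose m : ℂ) =
        (n - #x).choose j * (#x).choose m * (n - (j + m)).choose (n - r) := by
    have hcount := sum_choose_card_inter_mul_choose_card_inter hr
      (disjoint_compl_left (a := x)) j m
    rw [card_compl] at hcount
    simp only [sdiff_eq_inter_compl]
    exact_mod_cast hcount
  simp only [hahn_natCast hx (show s ≤ n by omega), sum_mul, mul_assoc]
  rw [sum_comm, mul_sum]
  refine sum_congr rfl fun j hj ↦ ?_
  have hchoose : ((n - #x).choose j : ℂ) ≠ 0 := by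
    have hjs : j ≤ s := mem_range_succ_iff.mp hj
    exact Nat.cast_ne_zero.mpr (Nat.choose_pos (by omega)).ne'
  simp only [← mul_sum, hmoment]
  field_simp

theorem sum_hahn_mul_choose_card_inter_eq_zero (hr : r ≤ Fintype.card Ω)
    (hs : s ≤ min (Fintype.card Ω - #x) r) {m : ℕ} (hm : m < s) :
    ∑ y ∈ powersetCard r univ,
      hahn (Fintype.card Ω) #x r s #(y \ x) * (#(y ∩ x)).choose m = 0 := by
  rw [sum_hahn_mul_choose_card_inter hr hs]
  rcases lt_or_ge #x m with hxm | hmx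
  · rw [Nat.choose_eq_zero_of_lt hxm, Nat.cast_zero, zero_mul]
  · have hx : #x ≤ Fintype.card Ω := card_le_univ x
    rw [sum_neg_one_pow_mul_choose_mul_descFactorial_div_mul_choose_eq_zero hr (by omega) hm
      (by omega), mul_zero]

theorem sum_hahn_mul_eval_eq_zero (hr : r ≤ Fintype.card Ω)
    (hs : s ≤ min (Fintype.card Ω - #x) r) {P : ℂ[X]} (hP : P.natDegree < s) :
    ∑ y ∈ powersetCard r univ,
      hahn (Fintype.card Ω) #x r s #(y \ x) * P.eval (#(y \ x) : ℂ) = 0 := by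
  let Q := P.comp (C (r : ℂ) - X)
  have hQ : Q.natDegree < s := by
    calc Q.natDegree ≤ P.natDegree * (C (r : ℂ) - X).natDegree := natDegree_comp_le
      _ ≤ P.natDegree * 1 := by gcongr; compute_degree
      _ < s := by rwa [mul_one]
  have hPQ : ∀ y ∈ powersetCard r (univ : Finset Ω),
      P.eval (#(y \ x) : ℂ) = ∑ m ∈ range s, (#(y ∩ x)).choose m * (fwdDiff 1)^[m] Q.eval 0 := by
    intro y hy
    have hcard : #(y \ x) + #(y ∩ x) = r := by
      rw [card_sdiff_add_card_inter, (mem_powersetCard.mp hy).2]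
    rw [← eval_natCast_eq_sum_choose_mul_fwdDiff hQ, eval_comp, eval_sub, eval_C, eval_X, ← hcard,
      Nat.cast_add, add_sub_cancel_right]
  rw [sum_congr rfl fun y hy ↦ by rw [hPQ y hy, mul_sum], sum_comm]
  refine sum_eq_zero fun m hm ↦ ?_
  simp only [← mul_assoc]
  rw [← sum_mul, sum_hahn_mul_choose_card_inter_eq_zero hr hs (mem_range.mp hm), zero_mul]

theorem sum_hahn_mul_hahn_eq_zero_of_lt (hr : r ≤ Fintype.card Ω)
    (hs : s ≤ min (Fintype.card Ω - #x) r) {s' : ℕ} (hlt : s' < s) :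
    ∑ y ∈ powersetCard r univ, hahn (Fintype.card Ω) #x r s #(y \ x) *
      hahn (Fintype.card Ω) #x r s' #(y \ x) = 0 := by
  obtain ⟨P, hP, hP_eval⟩ := exists_natDegree_le_eval_eq_hahn (Fintype.card Ω) #x r s'
  simpa only [hP_eval] using sum_hahn_mul_eval_eq_zero hr hs (hP.trans_lt hlt)

end Hahn

theorem stmt_11_general {Ω : Type*} [Fintype Ω] [DecidableEq Ω] (n r1 r2 s s' : ℕ)
    (hn : Fintype.card Ω = n) (h2 : r2 ≤ n) (hs : s ≤ min (n - r1) r2)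
    (hs' : s' ≤ min (n - r1) r2) (hne : s ≠ s') (x1 : {x : Finset Ω // x.card = r1}) :
    ∑ x2 : {x : Finset Ω // x.card = r2},
      hahn n r1 r2 s #(x2.1 \ x1.1) * hahn n r1 r2 s' #(x2.1 \ x1.1) = 0 := by
  obtain ⟨x, rfl⟩ := x1
  subst hn
  rw [← sum_subtype (powersetCard r2 univ) (by simp) fun y ↦
    hahn (Fintype.card Ω) #x r2 s #(y \ x) * hahn (Fintype.card Ω) #x r2 s' #(y \ x)]
  rcases hne.lt_or_gt with hlt | hlt
  · simpa only [mul_comm] using sum_hahn_mul_hahn_eq_zero_of_lt h2 hs' hlt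
  · exact sum_hahn_mul_hahn_eq_zero_of_lt h2 hs hlt

/-- Orthogonality of the operators `Λ_s^{r1,r2}` and `Λ_{s'}^{r1,r2}` for `s ≠ s'` with
respect to the Hilbert–Schmidt inner product:
`Σ_{x1,x2} λ_s^{r1,r2}(|x2\x1|;n) λ_{s'}^{r1,r2}(|x2\x1|;n) = 0`. -/
theorem stmt_11 {Ω : Type*} [Fintype Ω] [DecidableEq Ω] (n r1 r2 s s' : ℕ)
    (hn : Fintype.card Ω = n) (h1 : r1 ≤ n) (h2 : r2 ≤ n)
    (hs : s ≤ min (min r1 (n - r1)) (min r2 (n - r2)))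
    (hs' : s' ≤ min (min r1 (n - r1)) (min r2 (n - r2))) (hne : s ≠ s') :
    ∑ x1 : {x : Finset Ω // x.card = r1}, ∑ x2 : {x : Finset Ω // x.card = r2},
        hahn n r1 r2 s ((((x2 : Finset Ω) \ (x1 : Finset Ω)).card : ℕ) : ℂ) *
          hahn n r1 r2 s' ((((x2 : Finset Ω) \ (x1 : Finset Ω)).card : ℕ) : ℂ) = 0 := by
  exact sum_eq_zero fun x1 _ ↦ stmt_11_general n r1 r2 s s' hn h2 (by omega) (by omega) hne x1
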